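/- Let K_S(x, y) = (sin(π(x_1−y_1))/(π(x_1−y_1)))·(sin(π(x_2−y_2))/(π(x_2−y_2))) for x, y ∈ ℝ² (with sin(πt)/(πt) = 1 at t = 0), and for n ∈ ℤ² let S_n = S_0 × (n + S_0) with S_0 = [−1/2, 1/2)². Define a_0 = 1 − ∫_{S_0×S_0} |K_S(x,y)|² dx dy, a_n = −∫_{S_n} |K_S(x,y)|² dx dy for n ≠ 0, and ω(θ_1, θ_2) = ∑_{n∈ℤ²} a_n e^{2πi(n_1θ_1 + n_2θ_2)}. Then there exists C > 0 such that |ω(θ_1, θ_2) − ω(θ_1, 0) − ω(0, θ_2)| ≤ C|θ_1 θ_2| for all θ_1, θ_2 ∈ (−1/2, 1/2). -/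

import Mathlib

/-!
The kernel is a tensor product, so the cell integrals factor as `I n = b n₁ * b n₂` with
`b m = ∫∫ sinc² (π (x - z - m))` over the unit square (`cellMass`,
`cellIntegral_eq`). With `f θ = ∑ b m exp(2πimθ)` (`cellChar`) this gives `ω θ₁ θ₂ = 1 - f θ₁ * f θ₂`. Parseval for the characters
`x ↦ exp(2πiux)` yields `∑ sinc² (π (u - m)) = 1` for every `u`, hence `f 0 = ∑ b m = 1`
(`hasSum_cellMass`), and the mixed difference collapses to `-(1 - f θ₁) * (1 - f θ₂)`.

It remains to see that `|1 - f θ|` is `O(|θ|)`. Since `b` is even,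
`1 - f θ = ∑ b m * (1 - cos(2πmθ))`, and `b m ≤ 1/m²` for `m ≠ 0`, so the sum is dominated by
`∑ (1 - cos(2πmθ))/m² = 2π² (|θ| - θ²)`, obtained from the Bernoulli polynomial `B₂`
(`norm_one_sub_cellChar_le`). Without the evenness of `b` the odd parts would cost a logarithm.
-/

open MeasureTheory Complex Real ENNReal

lemma intervalIntegral_exp_symm (s : ℝ) :
    ∫ x in (-(1/2) : ℝ)..(1/2), Complex.exp (2 * Real.pi * Complex.I * s * x)
      = (Real.sinc (Real.pi * s) : ℂ) := by
  by_cases hs : s = 0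
  · subst hs
    norm_num [Real.sinc_zero]
  have hp : (Real.pi : ℂ) ≠ 0 := by exact_mod_cast Real.pi_ne_zero
  have hs' : (s : ℂ) ≠ 0 := by exact_mod_cast hs
  have hc : (2 * Real.pi * Complex.I * s : ℂ) ≠ 0 := by
    simp [hp, hs', Complex.I_ne_zero]
  rw [integral_exp_mul_complex hc, Real.sinc_of_ne_zero (by simp [hs, Real.pi_ne_zero])]
  push_cast
  rw [Complex.sin]
  have e1 : (2 * Real.pi * Complex.I * s : ℂ) * (1/2) = Real.pi * s * Complex.I := by ring
  have e2 : (2 * Real.pi * Complex.I * s : ℂ) * (-(1/2)) = -(Real.pi * s) * Complex.I := by ring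
  rw [e1, e2]
  have hI := Complex.I_sq
  field_simp
  linear_combination (Complex.exp (↑π * ↑s * I) - Complex.exp (-(↑π * ↑s * I))) * hI

/-- The squared modulus of the `n`-th Fourier coefficient of the character `x ↦ exp(2πiux)` on a
period is `sinc² (π(u - n))`, so Parseval makes the integer translates of `sinc²` a partition of
unity. -/
lemma hasSum_sinc_sq (u : ℝ) :
    HasSum (fun n : ℤ => Real.sinc (Real.pi * (u - n)) ^ 2) 1 := by
  have hab : (-(1/2) : ℝ) < 1/2 := by norm_num
  have hcont : Continuous (fun x : ℝ => Complex.exp (2 * Real.pi * Complex.I * u * x)) := by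
    fun_prop
  have hnorm : ∀ x : ℝ, ‖Complex.exp (2 * Real.pi * Complex.I * u * x)‖ = 1 := by
    intro x
    have : (2 * Real.pi * Complex.I * u * x : ℂ) = ((2 * Real.pi * u * x : ℝ) : ℂ) * Complex.I := by
      push_cast; ring
    rw [this, Complex.norm_exp_ofReal_mul_I]
  have hL2 : MemLp (fun x : ℝ => Complex.exp (2 * Real.pi * Complex.I * u * x)) 2
      (volume.restrict (Set.Ioc (-(1/2)) (1/2))) :=
    MemLp.of_bound hcont.aestronglyMeasurable 1 (by simp [hnorm])
  have h := hasSum_sq_fourierCoeffOn hab hL2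
  convert h using 1
  · ext n
    rw [fourierCoeffOn_eq_integral]
    have : ∀ x : ℝ, fourier (-n) (x : AddCircle ((1/2 : ℝ) - -(1/2))) •
        Complex.exp (2 * Real.pi * Complex.I * u * x)
        = Complex.exp (2 * Real.pi * Complex.I * ((u - n : ℝ) : ℂ) * x) := by
      intro x
      rw [fourier_coe_apply, smul_eq_mul, ← Complex.exp_add]
      congr 1
      push_cast
      ring
    simp_rw [this]
    rw [intervalIntegral_exp_symm]
    norm_num
  · simp_rw [hnorm]
    norm_num

/-- The closed form of `∑ cos(2πnx)/n²` through the Bernoulli polynomial `B₂`, summed over all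
integers; the term `n = 0` is zero because `1 - cos 0 = 0`. -/
lemma hasSum_one_sub_cos {x : ℝ} (hx : x ∈ Set.Icc (0 : ℝ) 1) :
    HasSum (fun n : ℤ => 1 / (n : ℝ) ^ 2 * (1 - Real.cos (2 * Real.pi * n * x)))
      (2 * Real.pi ^ 2 * (x - x ^ 2)) := by
  have h0 := hasSum_one_div_nat_pow_mul_cos (k := 1) one_ne_zero
    (x := 0) (by simp)
  have h1 := hasSum_one_div_nat_pow_mul_cos (k := 1) one_ne_zero hx
  have h := h0.sub h1
  have key : ∀ y : ℝ, (Polynomial.map (algebraMap ℚ ℝ) (Polynomial.bernoulli (2 * 1))).eval y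
      = y ^ 2 - y + 6⁻¹ := fun y => bernoulliFun_two y
  rw [key, key] at h
  have h' : HasSum (fun n : ℕ => 1 / (n : ℝ) ^ 2 * (1 - Real.cos (2 * Real.pi * n * x)))
      (Real.pi ^ 2 * (x - x ^ 2)) := by
    convert! h using 1
    · ext n
      simp
      ring
    · norm_num [Nat.factorial]
      ring
  have h2 := HasSum.of_nat_of_neg (f := fun n : ℤ =>
    1 / (n : ℝ) ^ 2 * (1 - Real.cos (2 * Real.pi * n * x))) (by simpa using h') (by
      simpa using h')
  convert! h2 using 1
  simp
  ring

/-- The total mass of the squared one-dimensional sine kernel on `[-1/2,1/2) × (n + [-1/2,1/2))`,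
with the second variable translated back to `[-1/2,1/2)`. -/
noncomputable def cellMass (n : ℤ) : ℝ :=
  ∫ p in Set.Ico (-(1/2) : ℝ) (1/2) ×ˢ Set.Ico (-(1/2) : ℝ) (1/2),
    Real.sinc (Real.pi * (p.1 - p.2 - n)) ^ 2

lemma continuous_sinc_sq (n : ℤ) :
    Continuous (fun p : ℝ × ℝ => Real.sinc (Real.pi * (p.1 - p.2 - n)) ^ 2) :=
  (Real.continuous_sinc.comp (by fun_prop)).pow 2

lemma volume_cell : (volume : Measure (ℝ × ℝ)).real
    (Set.Ico (-(1/2) : ℝ) (1/2) ×ˢ Set.Ico (-(1/2) : ℝ) (1/2)) = 1 := by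
  rw [Measure.volume_eq_prod, measureReal_prod_prod]
  norm_num

instance isFiniteMeasure_cell : IsFiniteMeasure ((volume : Measure (ℝ × ℝ)).restrict
    (Set.Ico (-(1/2) : ℝ) (1/2) ×ˢ Set.Ico (-(1/2) : ℝ) (1/2))) := by
  constructor
  rw [Measure.restrict_apply_univ, Measure.volume_eq_prod, Measure.prod_prod]
  exact ENNReal.mul_lt_top (by simp [-neg_add_rev]) (by simp [-neg_add_rev])

lemma integrable_sinc_sq (n : ℤ) :
    IntegrableOn (fun p : ℝ × ℝ => Real.sinc (Real.pi * (p.1 - p.2 - n)) ^ 2)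
      (Set.Ico (-(1/2) : ℝ) (1/2) ×ˢ Set.Ico (-(1/2) : ℝ) (1/2)) := by
  refine Integrable.of_bound (continuous_sinc_sq n).aestronglyMeasurable 1 (.of_forall fun p => ?_)
  rw [Real.norm_eq_abs, abs_pow]
  exact pow_le_one₀ (abs_nonneg _) (Real.abs_sinc_le_one _)

lemma cellMass_nonneg (n : ℤ) : 0 ≤ cellMass n :=
  integral_nonneg fun _ => sq_nonneg _

lemma sinc_sq_le {v : ℝ} (hv : |v| ≤ 1) {n : ℤ} (hn : n ≠ 0) :
    Real.sinc (Real.pi * (v - n)) ^ 2 ≤ 1 / (n : ℝ) ^ 2 := by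
  have h1 : Real.sinc (Real.pi * (v - n)) ^ 2 ≤ 1 := by
    rw [← sq_abs]; exact pow_le_one₀ (abs_nonneg _) (Real.abs_sinc_le_one _)
  have hn' : (n : ℝ) ≠ 0 := by exact_mod_cast hn
  have hn1 : (1 : ℝ) ≤ |(n : ℝ)| := by exact_mod_cast Int.one_le_abs hn
  rcases hn1.eq_or_lt with h | h
  · rw [← sq_abs (n : ℝ), ← h]; simpa using h1
  · have hn2 : (2 : ℝ) ≤ |(n : ℝ)| := by
      have : 1 < |n| := by exact_mod_cast h
      have : 2 ≤ |n| := this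
      exact_mod_cast this
    have h3 : |(n : ℝ)| ≤ |Real.pi * (v - n)| := by
      have h4 : |(n : ℝ)| - |v| ≤ |v - n| := by
        rw [abs_sub_comm]; exact abs_sub_abs_le_abs_sub _ _
      rw [abs_mul, abs_of_pos Real.pi_pos]
      nlinarith [Real.pi_gt_three]
    have hne : Real.pi * (v - n) ≠ 0 := by
      intro h0; rw [h0, abs_zero] at h3; linarith
    rw [Real.sinc_of_ne_zero hne, div_pow]
    have hsq : (n : ℝ) ^ 2 ≤ (Real.pi * (v - n)) ^ 2 := sq_le_sq.mpr h3
    have : Real.sin (Real.pi * (v - n)) ^ 2 ≤ 1 := Real.sin_sq_le_one _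
    gcongr

lemma abs_sub_le_of_mem_cell {p : ℝ × ℝ}
    (hp : p ∈ Set.Ico (-(1/2) : ℝ) (1/2) ×ˢ Set.Ico (-(1/2) : ℝ) (1/2)) : |p.1 - p.2| ≤ 1 := by
  obtain ⟨⟨h1, h2⟩, h3, h4⟩ := hp
  rw [abs_le]; constructor <;> linarith

lemma cellMass_le {n : ℤ} (hn : n ≠ 0) : cellMass n ≤ 1 / (n : ℝ) ^ 2 := by
  have hm : MeasurableSet (Set.Ico (-(1/2) : ℝ) (1/2) ×ˢ Set.Ico (-(1/2) : ℝ) (1/2)) :=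
    measurableSet_Ico.prod measurableSet_Ico
  have := setIntegral_mono_on (μ := volume) (integrable_sinc_sq n)
    (integrable_const (1 / (n : ℝ) ^ 2)) hm
    fun p hp => sinc_sq_le (abs_sub_le_of_mem_cell hp) hn
  rw [setIntegral_const, volume_cell] at this
  simpa [cellMass] using this

lemma hasSum_cellMass : HasSum cellMass 1 := by
  have hm : MeasurableSet (Set.Ico (-(1/2) : ℝ) (1/2) ×ˢ Set.Ico (-(1/2) : ℝ) (1/2)) :=
    measurableSet_Ico.prod measurableSet_Ico
  -- `1/n² = 0` at `n = 0`, where the `Pi.single` summand supplies the trivial bound `1`.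
  have hsum : Summable (fun n : ℤ => 1 / (n : ℝ) ^ 2 + (Pi.single 0 1 : ℤ → ℝ) n) :=
    (Real.summable_one_div_int_pow.mpr one_lt_two).add (hasSum_pi_single 0 1).summable
  have h := hasSum_integral_of_dominated_convergence
    (μ := volume.restrict (Set.Ico (-(1/2) : ℝ) (1/2) ×ˢ Set.Ico (-(1/2) : ℝ) (1/2)))
    (F := fun (n : ℤ) (p : ℝ × ℝ) => Real.sinc (Real.pi * (p.1 - p.2 - n)) ^ 2)
    (f := fun _ => (1 : ℝ))
    (fun n _ => 1 / (n : ℝ) ^ 2 + (Pi.single 0 1 : ℤ → ℝ) n)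
    (fun n => (continuous_sinc_sq n).aestronglyMeasurable)
    (fun n => by
      filter_upwards [ae_restrict_mem hm] with p hp
      rw [Real.norm_eq_abs, abs_of_nonneg (sq_nonneg _)]
      by_cases hn : n = 0
      · subst hn
        simp only [Pi.single_eq_same, Int.cast_zero]
        rw [← sq_abs]
        have := pow_le_one₀ (n := 2) (abs_nonneg _)
          (Real.abs_sinc_le_one (Real.pi * (p.1 - p.2 - 0)))
        simpa using this
      · simpa [hn] using sinc_sq_le (abs_sub_le_of_mem_cell hp) hn)
    (.of_forall fun _ => hsum) (integrable_const _)
    (.of_forall fun p => hasSum_sinc_sq _)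
  rw [setIntegral_const, volume_cell, one_smul] at h
  exact h

lemma cellMass_neg (n : ℤ) : cellMass (-n) = cellMass n := by
  unfold cellMass
  rw [Measure.volume_eq_prod, ← Measure.prod_restrict, ← integral_prod_swap]
  congr 1
  ext p
  rw [← Real.sinc_neg]
  simp only [Prod.fst_swap, Prod.snd_swap]
  congr 2
  push_cast
  ring

lemma summable_cellMass_mul_exp (θ : ℝ) :
    Summable (fun n : ℤ => ‖(cellMass n : ℂ) *
      Complex.exp (2 * Real.pi * Complex.I * (n * θ))‖) := by
  refine hasSum_cellMass.summable.congr fun n => ?_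
  have : (2 * Real.pi * Complex.I * (n * θ) : ℂ) = ((2 * Real.pi * n * θ : ℝ) : ℂ) * Complex.I := by
    push_cast; ring
  rw [norm_mul, this, Complex.norm_exp_ofReal_mul_I, mul_one, Complex.norm_real,
    Real.norm_of_nonneg (cellMass_nonneg n)]

/-- The one-dimensional characteristic function of the weights `cellMass`. -/
noncomputable def cellChar (θ : ℝ) : ℂ :=
  ∑' n : ℤ, (cellMass n : ℂ) * Complex.exp (2 * Real.pi * Complex.I * (n * θ))

lemma cellChar_zero : cellChar 0 = 1 := by
  unfold cellChar
  simpa using (Complex.hasSum_ofReal.mpr hasSum_cellMass).tsum_eq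

/-- Evenness of the weights replaces `exp` by `cos`, making all terms of order `(nθ)²`. -/
lemma hasSum_one_sub_cellChar (θ : ℝ) :
    HasSum (fun n : ℤ => ((cellMass n * (1 - Real.cos (2 * Real.pi * n * θ)) : ℝ) : ℂ))
      (1 - cellChar θ) := by
  have h : HasSum (fun n : ℤ => (cellMass n : ℂ) *
      Complex.exp (2 * Real.pi * Complex.I * (n * θ))) (cellChar θ) :=
    (summable_cellMass_mul_exp θ).of_norm.hasSum
  have h' := (Equiv.neg ℤ).hasSum_iff.mpr h
  have h1 := Complex.hasSum_ofReal.mpr hasSum_cellMass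
  have h2 := h1.sub ((h.add h').mul_left (1 / 2))
  convert! h2 using 1
  · ext n
    simp only [Function.comp, Equiv.neg_apply, cellMass_neg]
    push_cast
    rw [Complex.cos]
    have e1 : (2 * Real.pi * Complex.I * (n * θ) : ℂ) = 2 * Real.pi * n * θ * Complex.I := by ring
    have e2 : (2 * Real.pi * Complex.I * (-n * θ) : ℂ) = -(2 * Real.pi * n * θ) * Complex.I := by
      ring
    rw [e1, e2]
    ring
  · push_cast
    ring

lemma norm_one_sub_cellChar_le {θ : ℝ} (hθ : |θ| ≤ 1) :
    ‖1 - cellChar θ‖ ≤ 2 * Real.pi ^ 2 * |θ| := by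
  have h := hasSum_one_sub_cellChar θ
  have h2 := hasSum_one_sub_cos (x := |θ|) ⟨abs_nonneg θ, hθ⟩
  have h3 := tsum_of_norm_bounded h2 (f := fun n : ℤ =>
    ((cellMass n * (1 - Real.cos (2 * Real.pi * n * θ)) : ℝ) : ℂ)) (by
      intro n
      have hc : Real.cos (2 * Real.pi * n * |θ|) = Real.cos (2 * Real.pi * n * θ) := by
        rcases abs_choice θ with h | h <;> rw [h]
        rw [mul_neg, Real.cos_neg]
      have hp : 0 ≤ 1 - Real.cos (2 * Real.pi * n * θ) := by
        linarith [Real.cos_le_one (2 * Real.pi * n * θ)]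
      rw [hc, Complex.norm_real, Real.norm_of_nonneg (mul_nonneg (cellMass_nonneg n) hp)]
      by_cases hn : n = 0
      · simp [hn]
      · exact mul_le_mul_of_nonneg_right (cellMass_le hn) hp)
  rw [h.tsum_eq] at h3
  refine h3.trans ?_
  gcongr
  linarith [sq_nonneg |θ|]

lemma cellIntegral_eq
    (K : ℝ × ℝ → ℝ × ℝ → ℝ)
    (hK : ∀ x y : ℝ × ℝ, K x y =
      (if x.1 - y.1 = 0 then 1 else Real.sin (Real.pi * (x.1 - y.1)) / (Real.pi * (x.1 - y.1))) *
      (if x.2 - y.2 = 0 then 1 else Real.sin (Real.pi * (x.2 - y.2)) / (Real.pi * (x.2 - y.2))))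
    (S₀ : Set (ℝ × ℝ)) (hS₀ : S₀ = Set.Ico (-(1/2) : ℝ) (1/2) ×ˢ Set.Ico (-(1/2) : ℝ) (1/2))
    (n : ℤ × ℤ) :
    ∫ x in S₀, ∫ y in (fun z : ℝ × ℝ => ((n.1 : ℝ) + z.1, (n.2 : ℝ) + z.2)) '' S₀, (K x y) ^ 2
      = cellMass n.1 * cellMass n.2 := by
  have hK' : ∀ x y : ℝ × ℝ, K x y =
      Real.sinc (Real.pi * (x.1 - y.1)) * Real.sinc (Real.pi * (x.2 - y.2)) := by
    intro x y
    simp [hK, Real.sinc_apply, Real.pi_ne_zero]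
  have hfun : (fun z : ℝ × ℝ => ((n.1 : ℝ) + z.1, (n.2 : ℝ) + z.2))
      = fun z => (((n.1 : ℝ), (n.2 : ℝ)) : ℝ × ℝ) + z := rfl
  have hinner : ∀ x : ℝ × ℝ,
      ∫ y in (fun z : ℝ × ℝ => ((n.1 : ℝ) + z.1, (n.2 : ℝ) + z.2)) '' S₀, (K x y) ^ 2
      = (∫ z in Set.Ico (-(1/2) : ℝ) (1/2), Real.sinc (Real.pi * (x.1 - z - n.1)) ^ 2) *
        ∫ z in Set.Ico (-(1/2) : ℝ) (1/2), Real.sinc (Real.pi * (x.2 - z - n.2)) ^ 2 := by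
    intro x
    rw [hfun, (measurePreserving_add_left volume
      (((n.1 : ℝ), (n.2 : ℝ)) : ℝ × ℝ)).setIntegral_image_emb
      (measurableEmbedding_addLeft _), hS₀, ← setIntegral_prod_mul]
    simp_rw [hK', mul_pow]
    rw [Measure.volume_eq_prod]
    congr 1
    ext z
    simp only [Prod.fst_add, Prod.snd_add]
    congr 4 <;> ring
  have hfib : ∀ m : ℤ, cellMass m = ∫ x in Set.Ico (-(1/2) : ℝ) (1/2),
      ∫ z in Set.Ico (-(1/2) : ℝ) (1/2), Real.sinc (Real.pi * (x - z - m)) ^ 2 := by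
    intro m
    unfold cellMass
    rw [Measure.volume_eq_prod, setIntegral_prod]
    exact integrable_sinc_sq m
  simp_rw [hinner]
  rw [hfib, hfib, hS₀, ← setIntegral_prod_mul, Measure.volume_eq_prod]

/-- The spectral density `ω` of the determinantal point process with kernel the tensor square
of the Dyson sine kernel satisfies the Zygmund-type estimate
`|ω(θ₁,θ₂) − ω(θ₁,0) − ω(0,θ₂)| ≤ C|θ₁θ₂|` for some `C > 0` and all `θ₁, θ₂ ∈ (−1/2,1/2)`. -/
theorem sine_tensor_spectral_density_mixed_difference_bound
    (K : ℝ × ℝ → ℝ × ℝ → ℝ)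
    (hK : ∀ x y : ℝ × ℝ, K x y =
      (if x.1 - y.1 = 0 then 1 else Real.sin (Real.pi * (x.1 - y.1)) / (Real.pi * (x.1 - y.1))) *
      (if x.2 - y.2 = 0 then 1 else Real.sin (Real.pi * (x.2 - y.2)) / (Real.pi * (x.2 - y.2))))
    (S₀ : Set (ℝ × ℝ)) (hS₀ : S₀ = Set.Ico (-(1/2) : ℝ) (1/2) ×ˢ Set.Ico (-(1/2) : ℝ) (1/2))
    (I : ℤ × ℤ → ℝ)
    (hI : ∀ n : ℤ × ℤ, I n =
      ∫ x in S₀, ∫ y in (fun z : ℝ × ℝ => ((n.1 : ℝ) + z.1, (n.2 : ℝ) + z.2)) '' S₀, (K x y) ^ 2)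
    (a : ℤ × ℤ → ℝ) (ha0 : a 0 = 1 - I 0) (han : ∀ n : ℤ × ℤ, n ≠ 0 → a n = -(I n))
    (ω : ℝ → ℝ → ℝ)
    (hω : ∀ θ₁ θ₂ : ℝ, ω θ₁ θ₂ = (∑' n : ℤ × ℤ,
      (a n : ℂ) * Complex.exp (2 * Real.pi * Complex.I * ((n.1 : ℂ) * θ₁ + (n.2 : ℂ) * θ₂))).re) :
    ∃ C : ℝ, 0 < C ∧ ∀ θ₁ ∈ Set.Ioo (-(1/2) : ℝ) (1/2), ∀ θ₂ ∈ Set.Ioo (-(1/2) : ℝ) (1/2),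
      |ω θ₁ θ₂ - ω θ₁ 0 - ω 0 θ₂| ≤ C * |θ₁ * θ₂| := by
  have hIn : ∀ n, I n = cellMass n.1 * cellMass n.2 := fun n => by
    rw [hI, cellIntegral_eq K hK S₀ hS₀]
  have ha : ∀ n, a n = (Pi.single 0 1 : ℤ × ℤ → ℝ) n - cellMass n.1 * cellMass n.2 := by
    intro n
    by_cases hn : n = 0
    · subst hn
      rw [ha0, hIn]
      simp
    · rw [han n hn, hIn]
      simp [hn]
  have hω' : ∀ θ₁ θ₂ : ℝ, ω θ₁ θ₂ = (1 - cellChar θ₁ * cellChar θ₂).re := by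
    intro θ₁ θ₂
    rw [hω]
    congr 1
    have h1 : HasSum (fun n : ℤ × ℤ =>
        ((cellMass n.1 : ℂ) * Complex.exp (2 * Real.pi * Complex.I * (n.1 * θ₁))) *
        ((cellMass n.2 : ℂ) * Complex.exp (2 * Real.pi * Complex.I * (n.2 * θ₂))))
        (cellChar θ₁ * cellChar θ₂) := by
      unfold cellChar
      rw [tsum_mul_tsum_of_summable_norm (summable_cellMass_mul_exp θ₁)
        (summable_cellMass_mul_exp θ₂)]
      exact (summable_mul_of_summable_norm (summable_cellMass_mul_exp θ₁)
        (summable_cellMass_mul_exp θ₂)).hasSum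
    refine (((hasSum_pi_single (0 : ℤ × ℤ) (1 : ℂ)).sub h1).congr_fun ?_).tsum_eq
    intro n
    rw [ha, mul_add, Complex.exp_add]
    by_cases hn : n = 0
    · subst hn; simp
    · simp [hn]; ring
  refine ⟨(2 * Real.pi ^ 2) * (2 * Real.pi ^ 2), by positivity, fun θ₁ h₁ θ₂ h₂ => ?_⟩
  have e : ω θ₁ θ₂ - ω θ₁ 0 - ω 0 θ₂ = (-((1 - cellChar θ₁) * (1 - cellChar θ₂))).re := by
    rw [hω', hω', hω', cellChar_zero, ← Complex.sub_re, ← Complex.sub_re]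
    congr 1
    ring
  have b₁ := norm_one_sub_cellChar_le (θ := θ₁)
    (abs_le.mpr ⟨by linarith [h₁.1], by linarith [h₁.2]⟩)
  have b₂ := norm_one_sub_cellChar_le (θ := θ₂)
    (abs_le.mpr ⟨by linarith [h₂.1], by linarith [h₂.2]⟩)
  rw [e]
  refine (Complex.abs_re_le_norm _).trans ?_
  rw [norm_neg, norm_mul, abs_mul]
  calc ‖1 - cellChar θ₁‖ * ‖1 - cellChar θ₂‖
      ≤ (2 * Real.pi ^ 2 * |θ₁|) * (2 * Real.pi ^ 2 * |θ₂|) := by gcongr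
    _ = _ := by ring
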